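/- arXiv:0812.1432 — 2 statements merged into one kernel-verified Lean document; each statement's English description precedes it below -/
import Mathlib

section
/- The quadratic polynomial ζ₁ is a singular vector of weight λ₁ for the E₇-action: D_i ζ₁ = 0 for every i = 1,…,7, and H_r ζ₁ = δ_{r,1}·ζ₁ for every r = 1,…,7 (i.e. H₁ζ₁ = ζ₁ and H_rζ₁ = 0 for r ≠ 1). -/
noncomputable section

open MvPolynomial
open scoped Fin.NatCast

abbrev Rp : Type := MvPolynomial (Fin 56) ℂ

/-- `xv i` is the variable `x_i` (1-based index). -/
def xv (i : ℕ) : Rp := X ((i - 1 : ℕ) : Fin 56)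

/-- The derivation `x_a ∂_b` (1-based indices). -/
def xd (a b : ℕ) (f : Rp) : Rp := xv a * pderiv ((b - 1 : ℕ) : Fin 56) f

def D1 (f : Rp) : Rp := -xd 6 8 f - xd 9 11 f - xd 10 13 f - xd 12 16 f - xd 14 19 f - xd 17 22 f + xd 35 40 f + xd 38 43 f + xd 41 45 f + xd 44 47 f + xd 46 48 f + xd 49 51 f

def D2 (f : Rp) : Rp := xd 5 7 f + xd 6 9 f + xd 8 11 f - xd 20 23 f - xd 24 26 f - xd 27 29 f - xd 28 30 f - xd 31 33 f - xd 34 37 f + xd 46 49 f + xd 48 51 f + xd 50 52 f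

def D3 (f : Rp) : Rp := -xd 5 6 f - xd 7 9 f - xd 13 15 f - xd 16 18 f - xd 19 21 f - xd 22 25 f + xd 32 35 f + xd 36 38 f + xd 39 41 f + xd 42 44 f + xd 48 50 f + xd 51 52 f

def D4 (f : Rp) : Rp := xd 4 5 f - xd 9 10 f - xd 11 13 f - xd 18 20 f - xd 21 24 f - xd 25 28 f - xd 29 32 f - xd 33 36 f - xd 37 39 f - xd 44 46 f - xd 47 48 f + xd 52 53 f

def D5 (f : Rp) : Rp := xd 3 4 f - xd 10 12 f - xd 13 16 f - xd 15 18 f - xd 24 27 f - xd 26 29 f - xd 28 31 f - xd 30 33 f - xd 39 42 f - xd 41 44 f - xd 45 47 f + xd 53 54 f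

def D6 (f : Rp) : Rp := xd 2 3 f - xd 12 14 f - xd 16 19 f - xd 18 21 f - xd 20 24 f - xd 23 26 f - xd 31 34 f - xd 33 37 f - xd 36 39 f - xd 38 41 f - xd 43 45 f + xd 54 55 f

def D7 (f : Rp) : Rp := xd 1 2 f - xd 14 17 f - xd 19 22 f - xd 21 25 f - xd 24 28 f - xd 26 30 f - xd 27 31 f - xd 29 33 f - xd 32 36 f - xd 35 38 f - xd 40 43 f + xd 55 56 f

def Dop : ℕ → Rp → Rp
  | 1, f => D1 f
  | 2, f => D2 f
  | 3, f => D3 f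
  | 4, f => D4 f
  | 5, f => D5 f
  | 6, f => D6 f
  | 7, f => D7 f
  | _, _ => 0

/-- The algebra automorphism `S` with `S(x_r) = x_{57-r}`. -/
def Sm : Rp → Rp := fun f => rename (fun j : Fin 56 => 55 - j) f

/-- `D̃ᵢ = S ∘ Dᵢ ∘ S`. -/
def Dtop (i : ℕ) (f : Rp) : Rp := Sm (Dop i (Sm f))

def aRows : List (List ℤ) :=
  [[0,0,0,0,0,0,1],
   [0,0,0,0,0,1,-1],
   [0,0,0,0,1,-1,0],
   [0,0,0,1,-1,0,0],
   [0,1,1,-1,0,0,0],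
   [1,1,-1,0,0,0,0],
   [0,-1,1,0,0,0,0],
   [-1,1,0,0,0,0,0],
   [1,-1,-1,1,0,0,0],
   [1,0,0,-1,1,0,0],
   [-1,-1,0,1,0,0,0],
   [1,0,0,0,-1,1,0],
   [-1,0,1,-1,1,0,0],
   [1,0,0,0,0,-1,1],
   [0,0,-1,0,1,0,0],
   [-1,0,1,0,-1,1,0],
   [1,0,0,0,0,0,-1],
   [0,0,-1,1,-1,1,0],
   [-1,0,1,0,0,-1,1],
   [0,1,0,-1,0,1,0],
   [0,0,-1,1,0,-1,1],
   [-1,0,1,0,0,0,-1],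
   [0,-1,0,0,0,1,0],
   [0,1,0,-1,1,-1,1],
   [0,0,-1,1,0,0,-1],
   [0,-1,0,0,1,-1,1],
   [0,1,0,0,-1,0,1],
   [0,1,0,-1,1,0,-1]]

def aTab (i r : ℕ) : ℤ := (aRows.getD (i - 1) []).getD (r - 1) 0

/-- The coroot actions `H_r`. -/
def Hop (r : ℕ) (f : Rp) : Rp :=
  ∑ i ∈ Finset.Icc 1 28, (aTab i r : ℂ) • (xd i i f - xd (57 - i) (57 - i) f)

def zz1 : Rp := xv 1 * xv 17 + xv 2 * xv 14 + xv 3 * xv 12 + xv 4 * xv 10 + xv 5 * xv 9 - xv 6 * xv 7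

def zz2 : Rp := Dtop 1 zz1

def zz3 : Rp := Dtop 3 zz2

def zz4 : Rp := Dtop 4 zz2

def zz5 : Rp := Dtop 2 zz4

def zz6 : Rp := Dtop 5 zz4

def zz7 : Rp := Dtop 2 zz6

def zz8 : Rp := Dtop 6 zz6

def zz9 : Rp := Dtop 7 zz8

def zz10 : Rp := Dtop 4 zz7

def zz11 : Rp := Dtop 2 zz8

def zz12 : Rp := Dtop 3 zz10

def zz13 : Rp := Dtop 2 zz9

def zz14 : Rp := Dtop 4 zz11

def zz15 : Rp := Dtop 4 zz13

def zz16 : Rp := Dtop 3 zz14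

def zz17 : Rp := Dtop 5 zz14

def zz18 : Rp := Dtop 3 zz15

def zz19 : Rp := Dtop 1 zz12

def zz20 : Rp := Dtop 7 zz17

def zz21 : Rp := Dtop 3 zz17

def zz22 : Rp := Dtop 6 zz20

def zz23 : Rp := Dtop 1 zz16

def zz24 : Rp := Dtop 5 zz18

def zz25 : Rp := Dtop 4 zz21

def zz26 : Rp := Dtop 1 zz18

def zz27 : Rp := Dtop 3 zz22

def zz28 : Rp := Dtop 1 zz21

def zz29 : Rp := Dtop 4 zz24

def zz30 : Rp := Dtop 1 zz25

def zz31 : Rp := Dtop 5 zz26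

def zz32 : Rp := Dtop 4 zz27

def zz33 : Rp := Dtop 2 zz25

def zz34 : Rp := Dtop 1 zz29

def zz35 : Rp := Dtop 1 zz27

def zz36 : Rp := Dtop 5 zz32

def zz37 : Rp := Dtop 3 zz30

def zz38 : Rp := Dtop 2 zz29

def zz39 : Rp := Dtop 1 zz32

def zz40 : Rp := Dtop 1 zz33

def zz41 : Rp := Dtop 1 zz34

def zz42 : Rp := Dtop 2 zz32

def zz43 : Rp := Dtop 1 zz36

def zz44 : Rp := Dtop 2 zz37

def zz45 : Rp := Dtop 1 zz38

def zz46 : Rp := Dtop 3 zz39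

def zz47 : Rp := Dtop 2 zz36

def zz48 : Rp := Dtop 4 zz44

def zz49 : Rp := Dtop 2 zz41

def zz50 : Rp := Dtop 1 zz42

def zz51 : Rp := Dtop 3 zz43

def zz52 : Rp := Dtop 4 zz47

def zz53 : Rp := Dtop 5 zz48

def zz54 : Rp := Dtop 4 zz49

def zz55 : Rp := Dtop 3 zz50

def zz56 : Rp := Dtop 1 zz47

def zz57 : Rp := Dtop 4 zz51

def zz58 : Rp := Dtop 3 zz52

def zz59 : Rp := Dtop 6 zz53

def zz60 : Rp := Dtop 5 zz54

def zz61 : Rp := Dtop 4 zz55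

def zz62 : Rp := Dtop 3 zz56

def zz63 : Rp := Dtop 1 zz52

def zz64 : Rp := Dtop 7 zz59

def zz65 : Rp := Dtop 6 zz60

def zz66 : Rp := Dtop 5 zz61

def zz67 : Rp := Dtop 4 zz62

def zz68 : Rp := Dtop 2 zz57

def zz69 : Rp := Dtop 3 zz63

def zz70 : Rp := Dtop 1 zz58

def zetaList : List Rp := [zz1, zz2, zz3, zz4, zz5, zz6, zz7, zz8, zz9, zz10, zz11, zz12, zz13, zz14, zz15, zz16, zz17, zz18, zz19, zz20, zz21, zz22, zz23, zz24, zz25, zz26, zz27, zz28, zz29, zz30, zz31, zz32, zz33, zz34, zz35, zz36, zz37, zz38, zz39, zz40, zz41, zz42, zz43, zz44, zz45, zz46, zz47, zz48, zz49, zz50, zz51, zz52, zz53, zz54, zz55, zz56, zz57, zz58, zz59, zz60, zz61, zz62, zz63, zz64, zz65, zz66, zz67, zz68, zz69, zz70]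

/-- `zeta j` is `ζ_j` for `1 ≤ j ≤ 133` (1-based). -/
def zeta (j : ℕ) : Rp :=
  if j ≤ 70 then zetaList.getD (j - 1) 0 else Sm (zetaList.getD (133 - j) 0)

/-- The quartic singular vector `ς` of weight `λ₆`. -/
def sigmaP : Rp := zeta 1 * zeta 19 - zeta 2 * zeta 12 + zeta 3 * zeta 10 - zeta 4 * zeta 7 + zeta 5 * zeta 6

/-- The cubic singular vector `ϑ` of weight `λ₇`. -/
def thetaP : Rp :=
  ((1 : ℂ)/2) • (xv 1 * zeta 64) - xv 2 * zeta 59 + xv 3 * zeta 53 - xv 4 * zeta 48 + xv 5 * zeta 44 - xv 6 * zeta 40 - xv 7 * zeta 37 + xv 8 * zeta 33 + xv 9 * zeta 30 + xv 10 * zeta 28 - xv 11 * zeta 25 + xv 12 * zeta 23 - xv 13 * zeta 21 + xv 14 * zeta 19 + xv 15 * zeta 17 - xv 16 * zeta 16 + xv 18 * zeta 14 - xv 19 * zeta 12 + xv 20 * zeta 11 + xv 21 * zeta 10 + xv 23 * zeta 8 + xv 24 * zeta 7 + xv 26 * zeta 6 + xv 27 * zeta 5 + xv 29 * zeta 4 +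 xv 32 * zeta 3 + xv 35 * zeta 2 + xv 40 * zeta 1

def IsetE7 : Finset ℕ := {1,2,3,5,6,9,10,11,12,15,17,18,19,21,22,26,27,28,29,33,34,35,36,40,41,42,43,44,50,51,52,53,54,55,58,63}

/-- Cartan's quartic `E₇`-invariant `η`. -/
def etaP : Rp :=
  4 * ((∑ i ∈ IsetE7, zeta i * zeta (134 - i)) -
        ∑ r ∈ Finset.Icc 1 63 \ IsetE7, zeta r * zeta (134 - r))
  + 4 * zeta 70 * (zeta 70 - 2 * zeta 68 - 3 * zeta 69 + 4 * zeta 67 - 3 * zeta 66 + 2 * zeta 65 - zeta 64)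
  + zeta 68 * (7 * zeta 68 + 16 * zeta 69 - 24 * zeta 67 + 18 * zeta 66 - 12 * zeta 65 + 6 * zeta 64)
  + 4 * zeta 69 * (3 * zeta 69 - 8 * zeta 67 + 6 * zeta 66 - 4 * zeta 65 + 2 * zeta 64)
  + 4 * zeta 67 * (6 * zeta 67 - 9 * zeta 66 + 6 * zeta 65 - 3 * zeta 64)
  + zeta 66 * (15 * zeta 66 - 20 * zeta 65 + 10 * zeta 64)
  + 8 * zeta 65 * (zeta 65 - zeta 64)
  + 3 * zeta 64 ^ 2

/-- The iterated partial derivative `∂^m = ∂₁^{m₁} ∘ ⋯ ∘ ∂₅₆^{m₅₆}`. -/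
def pdMulti (m : Fin 56 →₀ ℕ) (f : Rp) : Rp :=
  (List.finRange 56).foldr (fun i g => (fun h => pderiv i h)^[m i] g) f

/-- The constant-coefficient differential operator `𝒟` obtained from `η` by
replacing each variable by the corresponding partial derivative. -/
def Dcal (f : Rp) : Rp := ∑ m ∈ etaP.support, MvPolynomial.coeff m etaP • pdMulti m f

/-- The specialization `φ` killing `x₃, …, x₅₄`. -/
def phiP : Rp →ₐ[ℂ] Rp :=
  aeval (fun j : Fin 56 => if (j : ℕ) ≤ 1 ∨ 54 ≤ (j : ℕ) then X j else 0)

def edgesE7 : List (ℕ × ℕ) := [(1,3),(3,4),(2,4),(4,5),(5,6),(6,7)]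

/-- The Cartan matrix of `E₇` (Bourbaki-style labeling, node 2 attached to node 4). -/
def cartanE7 (i j : ℕ) : ℤ :=
  if i = j then 2 else if (i, j) ∈ edgesE7 ∨ (j, i) ∈ edgesE7 then -1 else 0

def epsE7 (i : ℕ) : ℤ := if i = 1 ∨ i = 3 then -1 else 1

/-- The partial derivative of a variable. -/
lemma pderiv_xv (b i : ℕ) : pderiv ((b - 1 : ℕ) : Fin 56) (xv i) =
    if ((i - 1) % 56) = ((b - 1) % 56) then 1 else 0 := by
  unfold xv
  rw [pderiv_X, Pi.single_apply]
  congr 1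
  rw [Fin.ext_iff]
  simp [Fin.val_natCast]

lemma xd_zz1 (a b : ℕ) : xd a b zz1 = xv a * (
    (xv 1 * (if 16 = (b - 1) % 56 then 1 else 0) + xv 17 * (if 0 = (b - 1) % 56 then 1 else 0))
    + (xv 2 * (if 13 = (b - 1) % 56 then 1 else 0) + xv 14 * (if 1 = (b - 1) % 56 then 1 else 0))
    + (xv 3 * (if 11 = (b - 1) % 56 then 1 else 0) + xv 12 * (if 2 = (b - 1) % 56 then 1 else 0))
    + (xv 4 * (if 9 = (b - 1) % 56 then 1 else 0) + xv 10 * (if 3 = (b - 1) % 56 then 1 else 0))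
    + (xv 5 * (if 8 = (b - 1) % 56 then 1 else 0) + xv 9 * (if 4 = (b - 1) % 56 then 1 else 0))
    - (xv 6 * (if 6 = (b - 1) % 56 then 1 else 0)
      + xv 7 * (if 5 = (b - 1) % 56 then 1 else 0))) := by
  simp only [xd, zz1, map_add, map_sub, Derivation.leibniz, smul_eq_mul, pderiv_xv]

set_option maxHeartbeats 4000000 in
theorem zeta1_singular_vector :
    (∀ i ∈ Finset.Icc 1 7, Dop i zz1 = 0) ∧
    (∀ r ∈ Finset.Icc 1 7, Hop r zz1 = if r = 1 then zz1 else 0) := by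
  constructor
  · intro i hi
    fin_cases hi <;>
    · simp [Dop, D1, D2, D3, D4, D5, D6, D7, xd_zz1]
      try ring
  · have hI : Finset.Icc 1 28 = Finset.image (· + 1) (Finset.range 28) := by decide
    intro r hr
    fin_cases hr <;>
    · unfold Hop
      rw [hI, Finset.sum_image (by intro a _ b _ h; simpa using h)]
      simp [Finset.sum_range_succ, aTab, aRows, xd_zz1]
      try simp only [zz1]
      try ring
end
end

section
/- The explicit operators satisfy the defining commutation relations of a representation of the E₇ Lie algebra: for all r, i ∈ {1,…,7}, H_r∘D_i − D_i∘H_r = G_{ri}·D_i as ℂ-linear operators on R; for all i ≠ j in {1,…,7}, D_i∘D̃_j − D̃_j∘D_i = 0; and for each i, D_i∘D̃_i − D̃_i∘D_i = ε_i·H_i, where (ε₁,…,ε₇) = (−1, 1, −1, 1, 1, 1, 1). -/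
noncomputable section

open MvPolynomial
open scoped Fin.NatCast

/-! Operators are encoded by lists of terms `(a, b, c)` standing for `c · x_a ∂_b` (1-based). -/

def TL : ℕ → List (ℕ × ℕ × ℤ)
  | 1 => [(6, 8, -1), (9, 11, -1), (10, 13, -1), (12, 16, -1), (14, 19, -1), (17, 22, -1), (35, 40, 1), (38, 43, 1), (41, 45, 1), (44, 47, 1), (46, 48, 1), (49, 51, 1)]
  | 2 => [(5, 7, 1), (6, 9, 1), (8, 11, 1), (20, 23, -1), (24, 26, -1), (27, 29, -1), (28, 30, -1), (31, 33, -1), (34, 37, -1), (46, 49, 1), (48, 51, 1), (50, 52, 1)]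
  | 3 => [(5, 6, -1), (7, 9, -1), (13, 15, -1), (16, 18, -1), (19, 21, -1), (22, 25, -1), (32, 35, 1), (36, 38, 1), (39, 41, 1), (42, 44, 1), (48, 50, 1), (51, 52, 1)]
  | 4 => [(4, 5, 1), (9, 10, -1), (11, 13, -1), (18, 20, -1), (21, 24, -1), (25, 28, -1), (29, 32, -1), (33, 36, -1), (37, 39, -1), (44, 46, -1), (47, 48, -1), (52, 53, 1)]
  | 5 => [(3, 4, 1), (10, 12, -1), (13, 16, -1), (15, 18, -1), (24, 27, -1), (26, 29, -1), (28, 31, -1), (30, 33, -1), (39, 42, -1), (41, 44, -1), (45, 47, -1), (53, 54, 1)]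
  | 6 => [(2, 3, 1), (12, 14, -1), (16, 19, -1), (18, 21, -1), (20, 24, -1), (23, 26, -1), (31, 34, -1), (33, 37, -1), (36, 39, -1), (38, 41, -1), (43, 45, -1), (54, 55, 1)]
  | 7 => [(1, 2, 1), (14, 17, -1), (19, 22, -1), (21, 25, -1), (24, 28, -1), (26, 30, -1), (27, 31, -1), (29, 33, -1), (32, 36, -1), (35, 38, -1), (40, 43, -1), (55, 56, 1)]
  | _ => []

/-- Terms of the coroot action. -/
def HL (r : ℕ) : List (ℕ × ℕ × ℤ) :=
  (List.range' 1 28).flatMap fun i => [(i, i, aTab i r), (57 - i, 57 - i, -aTab i r)]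

/-- The flip of indices `r ↦ 57 - r`. -/
def flipL (T : List (ℕ × ℕ × ℤ)) : List (ℕ × ℕ × ℤ) :=
  T.map fun t => (57 - t.1, 57 - t.2.1, t.2.2)

def scaleL (c : ℤ) (T : List (ℕ × ℕ × ℤ)) : List (ℕ × ℕ × ℤ) :=
  T.map fun t => (t.1, t.2.1, c * t.2.2)

/-- The derivation encoded by a list of terms. -/
def der : List (ℕ × ℕ × ℤ) → Derivation ℂ Rp Rp
  | [] => 0
  | t :: T => (t.2.2 : ℂ) • (xv t.1 • pderiv ((t.2.1 - 1 : ℕ) : Fin 56)) + der T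

theorem der_nil (f : Rp) : der [] f = 0 := rfl

theorem der_cons (t : ℕ × ℕ × ℤ) (T : List (ℕ × ℕ × ℤ)) (f : Rp) :
    der (t :: T) f = (t.2.2 : ℂ) • xd t.1 t.2.1 f + der T f := rfl

theorem der_append (S T : List (ℕ × ℕ × ℤ)) (f : Rp) :
    der (S ++ T) f = der S f + der T f := by
  induction S with
  | nil => simp [der_nil]
  | cons t S ih => simp only [List.cons_append, der_cons, ih, add_assoc]

theorem der_scale (c : ℤ) (T : List (ℕ × ℕ × ℤ)) (f : Rp) :
    der (scaleL c T) f = (c : ℂ) • der T f := by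
  induction T with
  | nil => simp [scaleL, der_nil]
  | cons t S ih =>
    have h : scaleL c (t :: S) = (t.1, t.2.1, c * t.2.2) :: scaleL c S := rfl
    rw [h, der_cons, der_cons, ih, smul_add, smul_smul]
    push_cast
    rfl

/-- Linear forms as sparse lists. -/
def evalV : List (Fin 56 × ℤ) → Rp
  | [] => 0
  | p :: v => (p.2 : ℂ) • X p.1 + evalV v

theorem evalV_append (v w : List (Fin 56 × ℤ)) : evalV (v ++ w) = evalV v + evalV w := by
  induction v with
  | nil => simp [evalV]
  | cons p v ih => simp only [List.cons_append, evalV, ih, add_assoc]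

/-- Action on one scaled basis vector. -/
def act1 (p : Fin 56 × ℤ) : List (ℕ × ℕ × ℤ) → List (Fin 56 × ℤ)
  | [] => []
  | t :: T => if ((t.2.1 - 1 : ℕ) : Fin 56) = p.1
      then (((t.1 - 1 : ℕ) : Fin 56), p.2 * t.2.2) :: act1 p T else act1 p T

def act (T : List (ℕ × ℕ × ℤ)) : List (Fin 56 × ℤ) → List (Fin 56 × ℤ)
  | [] => []
  | p :: v => act1 p T ++ act T v

theorem evalV_act1 (p : Fin 56 × ℤ) (T : List (ℕ × ℕ × ℤ)) :
    evalV (act1 p T) = (p.2 : ℂ) • der T (X p.1) := by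
  induction T with
  | nil => simp [act1, der_nil, evalV]
  | cons t T ih =>
    rw [der_cons, smul_add, ← ih, act1]
    split_ifs with h
    · rw [evalV]
      congr 1
      rw [xd, h, pderiv_X_self, smul_smul, mul_one]
      push_cast
      rfl
    · rw [xd, pderiv_X_of_ne (Ne.symm h)]
      simp

theorem evalV_act (T : List (ℕ × ℕ × ℤ)) (v : List (Fin 56 × ℤ)) :
    evalV (act T v) = der T (evalV v) := by
  induction v with
  | nil => simp [act, evalV]
  | cons p v ih =>
    rw [act, evalV_append, evalV_act1, ih, evalV, Derivation.map_add, Derivation.map_smul]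

/-- Coefficient of `X a`. -/
def coefV (a : Fin 56) : List (Fin 56 × ℤ) → ℤ
  | [] => 0
  | p :: v => if p.1 = a then p.2 + coefV a v else coefV a v

theorem evalV_eq_sum (v : List (Fin 56 × ℤ)) :
    evalV v = ∑ a, (coefV a v : ℂ) • (X a : Rp) := by
  induction v with
  | nil => simp [evalV, coefV]
  | cons p v ih =>
    have h : ∀ a, ((coefV a (p :: v) : ℤ) : ℂ) • (X a : Rp)
        = (if p.1 = a then (p.2 : ℂ) • (X a : Rp) else 0) + (coefV a v : ℂ) • (X a : Rp) := by
      intro a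
      rw [coefV]
      split_ifs with h
      · push_cast
        rw [add_smul]
      · rw [zero_add]
    simp_rw [h, Finset.sum_add_distrib, evalV, ih]
    simp

theorem coefV_eq_zero (a : Fin 56) (v : List (Fin 56 × ℤ)) (h : ∀ p ∈ v, p.1 ≠ a) :
    coefV a v = 0 := by
  induction v with
  | nil => rfl
  | cons p v ih =>
    rw [coefV, if_neg (h p (List.mem_cons_self ..)),
      ih fun q hq => h q (List.mem_cons_of_mem _ hq)]

/-- All coefficients of a sparse linear form vanish (computable check). -/
def isZeroV (v : List (Fin 56 × ℤ)) : Bool :=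
  v.all fun p => coefV p.1 v == 0

theorem evalV_eq_zero (v : List (Fin 56 × ℤ)) (h : isZeroV v = true) : evalV v = 0 := by
  rw [evalV_eq_sum]
  refine Finset.sum_eq_zero fun a _ => ?_
  have : coefV a v = 0 := by
    by_cases ha : ∃ p ∈ v, p.1 = a
    · obtain ⟨p, hp, rfl⟩ := ha
      simpa using List.all_eq_true.mp h p hp
    · push Not at ha
      exact coefV_eq_zero a v ha
  rw [this, Int.cast_zero, zero_smul]

/-- Computable check of `[S, T] = U` on generators. -/
def chk (S T U : List (ℕ × ℕ × ℤ)) : Bool :=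
  (List.finRange 56).all fun k =>
    isZeroV (act S (act1 (k, 1) T) ++ (act T (act1 (k, -1) S) ++ act1 (k, -1) U))

theorem der_comm {S T U : List (ℕ × ℕ × ℤ)} (h : chk S T U) (f : Rp) :
    der S (der T f) - der T (der S f) = der U f := by
  have key : ⁅der S, der T⁆ = der U := by
    apply MvPolynomial.derivation_ext
    intro k
    have e := evalV_eq_zero _ (List.all_eq_true.mp h k (List.mem_finRange k))
    rw [Derivation.commutator_apply]
    simp only [evalV_act, evalV_append, evalV_act1, Int.cast_one, Int.cast_neg, neg_smul,
      one_smul, map_neg] at e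
    rw [← sub_eq_zero, ← e]
    abel
  rw [← key, Derivation.commutator_apply]

theorem Dop_eq (i : ℕ) (hi : i ∈ Finset.Icc 1 7) (f : Rp) : Dop i f = der (TL i) f := by
  rw [Finset.mem_Icc] at hi
  obtain ⟨h1, h2⟩ := hi
  interval_cases i <;>
  simp only [Dop, D1, D2, D3, D4, D5, D6, D7, TL, der_cons, der_nil, Int.cast_neg, Int.cast_one,
    neg_smul, one_smul] <;> abel

theorem Hop_eq (r : ℕ) (f : Rp) : Hop r f = der (HL r) f := by
  have h : Hop r f = ((List.range' 1 28).map fun i =>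
      (aTab i r : ℂ) • (xd i i f - xd (57 - i) (57 - i) f)).sum := rfl
  rw [h, HL]
  generalize List.range' 1 28 = l
  induction l with
  | nil => simp [der_nil]
  | cons i l ih =>
    rw [List.map_cons, List.sum_cons, List.flatMap_cons, der_append, ih, der_cons, der_cons,
      der_nil, smul_sub]
    push_cast
    rw [neg_smul]
    abel

theorem flip_inj : Function.Injective (fun j : Fin 56 => 55 - j) := by
  intro a b h
  simpa using h

theorem Sm_Sm (f : Rp) : Sm (Sm f) = f := by
  unfold Sm
  rw [rename_rename]
  have : ((fun j : Fin 56 => 55 - j) ∘ fun j : Fin 56 => 55 - j) = id := by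
    funext j
    simp
  rw [this, rename_id_apply]

theorem Sm_add (f g : Rp) : Sm (f + g) = Sm f + Sm g := map_add _ _ _

theorem Sm_smul (c : ℂ) (f : Rp) : Sm (c • f) = c • Sm f := map_smul _ _ _

theorem idx_flip (a : ℕ) (h1 : 1 ≤ a) (h2 : a ≤ 56) :
    (55 : Fin 56) - ((a - 1 : ℕ) : Fin 56) = ((57 - a - 1 : ℕ) : Fin 56) := by
  interval_cases a <;> rfl

theorem Sm_xd (a b : ℕ) (ha : 1 ≤ a ∧ a ≤ 56) (hb : 1 ≤ b ∧ b ≤ 56) (f : Rp) :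
    Sm (xd a b (Sm f)) = xd (57 - a) (57 - b) f := by
  have h : Sm (pderiv ((b - 1 : ℕ) : Fin 56) (Sm f)) = pderiv ((57 - b - 1 : ℕ) : Fin 56) f := by
    conv_rhs => rw [← Sm_Sm f]
    rw [← idx_flip b hb.1 hb.2]
    exact (pderiv_rename flip_inj _ _).symm
  have h2 : Sm (xd a b (Sm f)) = Sm (xv a) * Sm (pderiv ((b - 1 : ℕ) : Fin 56) (Sm f)) :=
    map_mul _ _ _
  have h3 : Sm (xv a) = xv (57 - a) := by
    unfold Sm xv
    rw [rename_X, idx_flip a ha.1 ha.2]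
  rw [h2, h, h3]
  rfl

theorem Sm_der (T : List (ℕ × ℕ × ℤ))
    (hT : ∀ t ∈ T, (1 ≤ t.1 ∧ t.1 ≤ 56) ∧ (1 ≤ t.2.1 ∧ t.2.1 ≤ 56)) (f : Rp) :
    Sm (der T (Sm f)) = der (flipL T) f := by
  induction T with
  | nil => exact map_zero _
  | cons t T ih =>
    have h : flipL (t :: T) = (57 - t.1, 57 - t.2.1, t.2.2) :: flipL T := rfl
    have ht := hT t (List.mem_cons_self ..)
    rw [h, der_cons, der_cons, Sm_add, Sm_smul, Sm_xd _ _ ht.1 ht.2,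
      ih fun s hs => hT s (List.mem_cons_of_mem _ hs)]

theorem TL_bound : ∀ i ∈ Finset.Icc 1 7, ∀ t ∈ TL i,
    (1 ≤ t.1 ∧ t.1 ≤ 56) ∧ (1 ≤ t.2.1 ∧ t.2.1 ≤ 56) := by
  decide +kernel

theorem Dtop_eq (i : ℕ) (hi : i ∈ Finset.Icc 1 7) (f : Rp) :
    Dtop i f = der (flipL (TL i)) f := by
  rw [Dtop, Dop_eq i hi, Sm_der _ (TL_bound i hi)]

theorem chk_HD : ∀ r ∈ Finset.Icc 1 7, ∀ i ∈ Finset.Icc 1 7,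
    chk (HL r) (TL i) (scaleL (cartanE7 r i) (TL i)) := by
  decide +kernel

theorem chk_DD : ∀ i ∈ Finset.Icc 1 7, ∀ j ∈ Finset.Icc 1 7, i ≠ j →
    chk (TL i) (flipL (TL j)) [] := by
  decide +kernel

theorem chk_DH : ∀ i ∈ Finset.Icc 1 7,
    chk (TL i) (flipL (TL i)) (scaleL (epsE7 i) (HL i)) := by
  decide +kernel

theorem e7_commutation_relations :
    (∀ r ∈ Finset.Icc 1 7, ∀ i ∈ Finset.Icc 1 7, ∀ f : Rp,
        Hop r (Dop i f) - Dop i (Hop r f) = (cartanE7 r i : ℂ) • Dop i f) ∧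
    (∀ i ∈ Finset.Icc 1 7, ∀ j ∈ Finset.Icc 1 7, i ≠ j → ∀ f : Rp,
        Dop i (Dtop j f) - Dtop j (Dop i f) = 0) ∧
    (∀ i ∈ Finset.Icc 1 7, ∀ f : Rp,
        Dop i (Dtop i f) - Dtop i (Dop i f) = (epsE7 i : ℂ) • Hop i f) := by
  refine ⟨fun r hr i hi f => ?_, fun i hi j hj hij f => ?_, fun i hi f => ?_⟩
  · rw [Dop_eq i hi, Dop_eq i hi, Hop_eq, Hop_eq, der_comm (chk_HD r hr i hi), der_scale]
  · rw [Dop_eq i hi, Dop_eq i hi, Dtop_eq j hj, Dtop_eq j hj, der_comm (chk_DD i hi j hj hij),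
      der_nil]
  · rw [Dop_eq i hi, Dop_eq i hi, Dtop_eq i hi, Dtop_eq i hi, Hop_eq, der_comm (chk_DH i hi),
      der_scale]
end
end
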